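/- arXiv:2111.05292 — 2 statements merged into one kernel-verified Lean document; each statement's English description precedes it below -/
import Mathlib

section
/- There exists an absolute constant c > 0 with the following property. Let m, T, n, N be positive integers, let V_0, V_1, …, V_T be fixed unitary matrices in U(4m) (the unitary group of complex (4m)×(4m) matrices), and define the variational unitary circuit map F : U(4)^T → U(4m) by F(U_1,…,U_T) = V_T (U_T ⊗ I_m) V_{T−1} ⋯ V_1 (U_1 ⊗ I_m) V_0, where ⊗ denotes the Kronecker product and I_m the m×m identity. Let Z be a measurable space with probability measure μ, let ρ : Z → ℂ^{4m×4m} be a measurable map whose values are density matrices (positive semidefinite with trace 1), let C > 0, and let O : Z → ℂ^{4m×4m} be a measurable map whose values are Hermitian matrices with ℓ²-operator norm ‖O_z‖ ≤ C for all z. Define the loss ℓ(θ; z) = Re Tr(O_z · F(θ) · ρ(z) · F(θ)*), the true risk R(θ) = ∫ ℓ(θ; z) dμ(z), and, for a sample S = (z_1,…,z_N) ∈ Z^N, the empirical risk R̂_S(θ) = (1/N) Σ_{i=1}^N ℓ(θ; z_i). Then for every δ ∈ (0,1), with probability at least 1 − δ over S drawn from the N-fold product measure μ^{⊗N}, simultaneously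 for every θ ∈ U(4)^T one has R(θ) − R̂_S(θ) ≤ c · C · ( √(T(1 + log T)/N) + √(log(2/δ)/N) ). In particular this bound holds for any parameter setting θ* = θ*(S) returned by an optimization procedure run on the training data S. -/
open MeasureTheory Matrix
open scoped Kronecker ComplexOrder

/-- The ℓ²→ℓ² operator norm (spectral norm) of a complex square matrix. -/
noncomputable def opNorm {n : Type*} [Fintype n] [DecidableEq n] (A : Matrix n n ℂ) : ℝ :=
  ‖Matrix.toEuclideanCLM (𝕜 := ℂ) A‖

/-- The variational unitary circuit: `circuit V U T = V T * (U (T-1) ⊗ I) * ⋯ * (U 0 ⊗ I) * V 0`,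
i.e. `T` parameterized 2-qubit gates interleaved with fixed global unitaries on `ℂ^{4m}`. -/
noncomputable def circuit {m : ℕ} (V : ℕ → Matrix (Fin 4 × Fin m) (Fin 4 × Fin m) ℂ)
    (U : ℕ → Matrix (Fin 4) (Fin 4) ℂ) : ℕ → Matrix (Fin 4 × Fin m) (Fin 4 × Fin m) ℂ
  | 0 => V 0
  | (t + 1) => V (t + 1) * (U t ⊗ₖ (1 : Matrix (Fin m) (Fin m) ℂ)) * circuit V U t

/-- The loss `ℓ(θ; z) = Re Tr(O_z · F(θ) · ρ(z) · F(θ)*)`. -/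
noncomputable def qloss {m : ℕ} {Z : Type*}
    (V : ℕ → Matrix (Fin 4 × Fin m) (Fin 4 × Fin m) ℂ) (T : ℕ)
    (O ρ : Z → Matrix (Fin 4 × Fin m) (Fin 4 × Fin m) ℂ)
    (U : ℕ → Matrix (Fin 4) (Fin 4) ℂ) (z : Z) : ℝ :=
  ((O z * circuit V U T * ρ z * (circuit V U T)ᴴ).trace).re

/-- One-sided Hoeffding bound for the empirical mean of a bounded function. -/
theorem measure_integral_sub_mean_ge_le {Z : Type*} [MeasurableSpace Z] (μ : Measure Z)
    [IsProbabilityMeasure μ] {N : ℕ} (hN : 0 < N) {g : Z → ℝ} (hg : Measurable g) {D : ℝ}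
    (hD : 0 ≤ D) (hb : ∀ z, |g z| ≤ D) {t : ℝ} (ht : 0 ≤ t) :
    (Measure.pi fun _ : Fin N => μ) {S | t ≤ (∫ z, g z ∂μ) - (1 / N) * ∑ i, g (S i)} ≤
      ENNReal.ofReal (Real.exp (-(N * t ^ 2 / (2 * D ^ 2)))) := by
  set P : Measure (Fin N → Z) := Measure.pi fun _ : Fin N => μ
  have hN' : (0 : ℝ) < N := by exact_mod_cast hN
  have hsub : ∀ i : Fin N, ProbabilityTheory.HasSubgaussianMGF
      (fun S : Fin N → Z => -g (S i) - -∫ z, g z ∂μ) ((‖D - -D‖₊ / 2) ^ 2) P := by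
    intro i
    have hmean : ∫ S, -g (S i) ∂P = -∫ z, g z ∂μ := by
      rw [integral_neg]
      congr 1
      rw [← (measurePreserving_eval (fun _ : Fin N => μ) i).map_eq,
        integral_map (measurable_pi_apply i).aemeasurable hg.aestronglyMeasurable]
    have h := ProbabilityTheory.hasSubgaussianMGF_of_mem_Icc (μ := P)
      (X := fun S : Fin N → Z => -g (S i)) (a := -D) (b := D)
      ((hg.comp (measurable_pi_apply i)).neg.aemeasurable)
      (.of_forall fun S => by
        have := abs_le.1 (hb (S i))
        exact ⟨by linarith, by linarith⟩)
    rwa [hmean] at h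
  have hind : ProbabilityTheory.iIndepFun
      (fun (i : Fin N) (S : Fin N → Z) => -g (S i) - -∫ z, g z ∂μ) P :=
    ProbabilityTheory.iIndepFun_pi (X := fun (_ : Fin N) z => -g z - -∫ z, g z ∂μ)
      fun _ => (hg.neg.sub_const _).aemeasurable
  have h := ProbabilityTheory.HasSubgaussianMGF.measure_sum_ge_le_of_iIndepFun hind
    (s := Finset.univ) (fun i _ => hsub i) (ε := N * t) (by positivity)
  have hset : {S : Fin N → Z | t ≤ (∫ z, g z ∂μ) - (1 / N) * ∑ i, g (S i)} =
      {S | N * t ≤ ∑ i, (-g (S i) - -∫ z, g z ∂μ)} := by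
    ext S
    simp only [Set.mem_ofPred_eq, Finset.sum_sub_distrib, Finset.sum_neg_distrib,
      Finset.sum_const, Finset.card_univ, Fintype.card_fin, nsmul_eq_mul]
    rw [← mul_le_mul_iff_right₀ hN', mul_sub, ← mul_assoc, mul_one_div_cancel hN'.ne']
    constructor <;> intro h <;> linarith
  rw [hset, ← ofReal_measureReal]
  refine ENNReal.ofReal_le_ofReal (h.trans (Real.exp_le_exp.2 (le_of_eq ?_)))
  have hnn : (((‖D - -D‖₊ / 2) ^ 2 : NNReal) : ℝ) = D ^ 2 := by
    push_cast
    rw [Real.norm_of_nonneg (by linarith)]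
    ring
  simp only [Finset.sum_const, Finset.card_univ, Fintype.card_fin, nsmul_eq_mul, NNReal.coe_mul,
    NNReal.coe_natCast, hnn]
  rcases hD.eq_or_lt with rfl | hD
  · simp
  · field_simp

theorem hasSum_succ_mul_half_pow : HasSum (fun k : ℕ => (k + 1 : ℝ) * (1 / 2) ^ k) 4 := by
  have h1 := hasSum_coe_mul_geometric_of_norm_lt_one (𝕜 := ℝ) (r := 1 / 2) (by norm_num)
  have h2 := h1.add hasSum_geometric_two
  norm_num at h2
  simpa [add_mul] using h2

/-- Generic chaining by union bounds: a class of functions that are sums of geometrically decaying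
increments, the `k`-th increment ranging over at most `exp (H * (k + 1))` functions, obeys a uniform
deviation bound. -/
theorem chaining_deviation_bound {Z Θ : Type*} [MeasurableSpace Z] (μ : Measure Z)
    [IsProbabilityMeasure μ] {N : ℕ} (hN : 0 < N) (f : Θ → Z → ℝ) (g : ℕ → Θ → Z → ℝ)
    {D H δ : ℝ} (hD : 0 < D) (hH : 0 ≤ H) (hδ : 0 < δ) (hδ1 : δ < 1)
    (hmeas : ∀ k θ, Measurable (g k θ)) (hbound : ∀ k θ z, |g k θ z| ≤ D * (1 / 2) ^ k)
    (hfin : ∀ k, (Set.range (g k)).Finite)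
    (hcard : ∀ k, ((Set.range (g k)).ncard : ℝ) ≤ Real.exp (H * (k + 1)))
    (hsum : ∀ θ z, HasSum (fun k => g k θ z) (f θ z)) :
    ENNReal.ofReal (1 - δ) ≤ (Measure.pi fun _ : Fin N => μ) {S | ∀ θ,
      (∫ z, f θ z ∂μ) - (1 / N) * ∑ i, f θ (S i) ≤
        8 * D * (Real.sqrt (H / N) + Real.sqrt (Real.log (2 / δ) / N))} := by
  set P : Measure (Fin N → Z) := Measure.pi fun _ : Fin N => μ
  set E : ℝ := Real.sqrt (H / N) + Real.sqrt (Real.log (2 / δ) / N) with hE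
  have hN' : (0 : ℝ) < N := by exact_mod_cast hN
  have hlog : 0 ≤ Real.log (2 / δ) := Real.log_nonneg (by rw [le_div_iff₀ hδ]; linarith)
  have hE0 : 0 ≤ E := by positivity
  have hEsq : H + Real.log (2 / δ) ≤ N * E ^ 2 := by
    have h1 := Real.sq_sqrt (show 0 ≤ H / N by positivity)
    have h2 := Real.sq_sqrt (show 0 ≤ Real.log (2 / δ) / N by positivity)
    have h3 : H / N + Real.log (2 / δ) / N ≤ E ^ 2 := by
      have := mul_nonneg (Real.sqrt_nonneg (H / N)) (Real.sqrt_nonneg (Real.log (2 / δ) / N))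
      rw [hE]; nlinarith
    calc H + Real.log (2 / δ) = N * (H / N + Real.log (2 / δ) / N) := by field_simp
      _ ≤ _ := by gcongr
  let t : ℕ → ℝ := fun k => 2 * D * E * ((k + 1 : ℝ) * (1 / 2) ^ k)
  have ht : HasSum t (8 * D * E) := by
    have := hasSum_succ_mul_half_pow.mul_left (2 * D * E)
    rwa [show 2 * D * E * 4 = 8 * D * E by ring] at this
  let bad : (Z → ℝ) → ℝ → Set (Fin N → Z) := fun h s =>
    {S | s ≤ (∫ z, h z ∂μ) - (1 / N) * ∑ i, h (S i)}
  let B : ℕ → Set (Fin N → Z) := fun k => ⋃ h ∈ (hfin k).toFinset, bad h (t k)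
  have hB : ∀ k, P (B k) ≤ ENNReal.ofReal (δ / 2 * (1 / 2) ^ k) := by
    intro k
    have hexp : ∀ h ∈ (hfin k).toFinset, P (bad h (t k)) ≤
        ENNReal.ofReal (Real.exp (-((k + 1) * (H + Real.log (2 / δ))))) := by
      intro h hh
      obtain ⟨θ, rfl⟩ := (hfin k).mem_toFinset.1 hh
      refine (measure_integral_sub_mean_ge_le μ hN (hmeas k θ) (by positivity) (hbound k θ)
        (by positivity)).trans (ENNReal.ofReal_le_ofReal (Real.exp_le_exp.2 (neg_le_neg ?_)))
      have : N * t k ^ 2 / (2 * (D * (1 / 2) ^ k) ^ 2) = 2 * (k + 1) ^ 2 * (N * E ^ 2) := by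
        simp only [t]; field_simp
      rw [this]
      have hk : (k + 1 : ℝ) ≤ 2 * (k + 1) ^ 2 := by
        have : (0 : ℝ) ≤ k := k.cast_nonneg
        nlinarith
      exact mul_le_mul hk hEsq (by positivity) (by positivity)
    calc P (B k) ≤ ∑ h ∈ (hfin k).toFinset, P (bad h (t k)) := measure_biUnion_finset_le _ _
      _ ≤ (hfin k).toFinset.card •
          ENNReal.ofReal (Real.exp (-((k + 1) * (H + Real.log (2 / δ))))) :=
        Finset.sum_le_card_nsmul _ _ _ hexp
      _ = ENNReal.ofReal ((Set.range (g k)).ncard *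
          Real.exp (-((k + 1) * (H + Real.log (2 / δ))))) := by
        rw [Set.ncard_eq_toFinset_card _ (hfin k), ENNReal.ofReal_mul (by positivity),
          ENNReal.ofReal_natCast, nsmul_eq_mul]
      _ ≤ _ := ENNReal.ofReal_le_ofReal ?_
    calc ((Set.range (g k)).ncard : ℝ) * Real.exp (-((k + 1) * (H + Real.log (2 / δ))))
        ≤ Real.exp (H * (k + 1)) * Real.exp (-((k + 1) * (H + Real.log (2 / δ)))) := by
          gcongr; exact hcard k
      _ = Real.exp (-Real.log (2 / δ)) ^ (k + 1) := by
          rw [← Real.exp_add, ← Real.exp_nat_mul]; congr 1; push_cast; ring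
      _ = (δ / 2) ^ (k + 1) := by
          rw [Real.exp_neg, Real.exp_log (by positivity), inv_div]
      _ = δ / 2 * (δ / 2) ^ k := pow_succ' _ _
      _ ≤ _ := by gcongr
  have hBU : P (⋃ k, B k) ≤ ENNReal.ofReal δ := by
    have hs : HasSum (fun k : ℕ => δ / 2 * (1 / 2 : ℝ) ^ k) δ := by
      have := hasSum_geometric_two.mul_left (δ / 2)
      rwa [div_mul_cancel₀ δ two_ne_zero] at this
    calc P (⋃ k, B k) ≤ ∑' k, P (B k) := measure_iUnion_le _
      _ ≤ ∑' k, ENNReal.ofReal (δ / 2 * (1 / 2) ^ k) := ENNReal.tsum_le_tsum hB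
      _ = ENNReal.ofReal δ := by
        rw [← ENNReal.ofReal_tsum_of_nonneg (fun k => by positivity) hs.summable, hs.tsum_eq]
  have hgeo : Summable fun k : ℕ => D * (1 / 2 : ℝ) ^ k := summable_geometric_two.mul_left D
  have hgood : (⋃ k, B k)ᶜ ⊆ {S | ∀ θ,
      (∫ z, f θ z ∂μ) - (1 / N) * ∑ i, f θ (S i) ≤ 8 * D * E} := by
    intro S hS θ
    have hint : ∀ k, Integrable (g k θ) μ := fun k =>
      .of_bound (hmeas k θ).aestronglyMeasurable (D * (1 / 2) ^ k) (.of_forall (hbound k θ))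
    have h1 : HasSum (fun k => ∫ z, g k θ z ∂μ) (∫ z, f θ z ∂μ) := by
      have := hasSum_integral_of_summable_integral_norm hint
        (hgeo.of_nonneg_of_le (fun k => integral_nonneg fun z => norm_nonneg _) fun k => by
          have := integral_mono (hint k).norm (integrable_const (D * (1 / 2 : ℝ) ^ k)) (hbound k θ)
          simpa using this)
      simpa only [(hsum θ _).tsum_eq] using this
    have h2 : HasSum (fun k => (1 / N : ℝ) * ∑ i, g k θ (S i)) ((1 / N) * ∑ i, f θ (S i)) :=
      (hasSum_sum fun i _ => hsum θ (S i)).mul_left _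
    refine hasSum_le (fun k => ?_) (h1.sub h2) ht
    by_contra! hlt
    exact hS (Set.mem_iUnion.2 ⟨k, Set.mem_biUnion
      ((hfin k).mem_toFinset.2 ⟨θ, rfl⟩) hlt.le⟩)
  refine le_trans ?_ (measure_mono hgood)
  have huniv : (1 : ENNReal) ≤ P (⋃ k, B k) + P (⋃ k, B k)ᶜ := by
    rw [← measure_univ (μ := P), ← Set.union_compl_self (⋃ k, B k)]
    exact measure_union_le _ _
  rw [ENNReal.ofReal_sub _ hδ.le, ENNReal.ofReal_one]
  exact tsub_le_iff_left.2 (huniv.trans (by gcongr))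

section Norms

open scoped Matrix.Norms.L2Operator

open scoped MatrixOrder in
/-- Trace duality against a density matrix. -/
theorem norm_trace_mul_le_of_density {n : Type*} [Fintype n] [DecidableEq n]
    (A ρ : Matrix n n ℂ) (hρ : ρ.PosSemidef) (htr : ρ.trace = 1) : ‖(A * ρ).trace‖ ≤ ‖A‖ := by
  obtain ⟨B, hB⟩ := CStarAlgebra.nonneg_iff_eq_star_mul_self.1 (Matrix.nonneg_iff_posSemidef.2 hρ)
  rw [Matrix.star_eq_conjTranspose] at hB
  subst hB
  let b : n → EuclideanSpace ℂ n := fun i => WithLp.toLp 2 (star (B i))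
  have hsum : ∑ i, ‖b i‖ ^ 2 = 1 := by
    have h : ((∑ i, ‖b i‖ ^ 2 : ℝ) : ℂ) = 1 := by
      rw [← htr, Matrix.trace_mul_comm]
      simp only [Matrix.trace, Matrix.diag, Matrix.mul_apply, Matrix.conjTranspose_apply, b,
        EuclideanSpace.norm_sq_eq]
      push_cast
      refine Finset.sum_congr rfl fun i _ => Finset.sum_congr rfl fun j _ => ?_
      simp [Complex.mul_conj, Complex.normSq_eq_norm_sq]
    exact_mod_cast h
  have htrace : (A * (Bᴴ * B)).trace =
      ∑ i, inner ℂ (b i) (Matrix.toEuclideanCLM (𝕜 := ℂ) A (b i)) := by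
    rw [← Matrix.mul_assoc, Matrix.trace_mul_comm]
    refine Finset.sum_congr rfl fun i _ => ?_
    simp [b, Matrix.mul_apply, PiLp.inner_apply, Matrix.mulVec, dotProduct, mul_comm]
  rw [htrace]
  calc _ ≤ ∑ i, ‖A‖ * ‖b i‖ ^ 2 := by
        refine norm_sum_le_of_le _ fun i _ => (norm_inner_le_norm _ _).trans ?_
        have := (Matrix.toEuclideanCLM (𝕜 := ℂ) A).le_opNorm (b i)
        rw [← Matrix.cstar_norm_def] at this
        nlinarith [norm_nonneg (b i)]
    _ = ‖A‖ := by rw [← Finset.mul_sum, hsum, mul_one]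

theorem norm_le_one_of_mem_unitaryGroup {n : Type*} [Fintype n] [DecidableEq n]
    {U : Matrix n n ℂ} (hU : U ∈ Matrix.unitaryGroup n ℂ) : ‖U‖ ≤ 1 := by
  cases subsingleton_or_nontrivial (Matrix n n ℂ)
  · simp [Subsingleton.elim U 0]
  · exact (CStarRing.norm_of_mem_unitary hU).le

theorem norm_single_le {n : Type*} [Fintype n] [DecidableEq n] (i j : n) (a : ℂ) :
    ‖Matrix.single i j a‖ ≤ ‖a‖ := by
  have h := Matrix.l2_opNorm_conjTranspose_mul_self (Matrix.single i j a)
  rw [Matrix.conjTranspose_single, Matrix.single_mul_single_same, ← Matrix.diagonal_single,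
    Matrix.l2_opNorm_diagonal, Pi.norm_single] at h
  have : ‖a‖ * ‖a‖ = ‖Matrix.single i j a‖ * ‖Matrix.single i j a‖ := by
    rw [← h, norm_mul, norm_star]
  nlinarith [norm_nonneg a, norm_nonneg (Matrix.single i j a)]

theorem norm_le_sum_norm_entries {n : Type*} [Fintype n] [DecidableEq n] (A : Matrix n n ℂ) :
    ‖A‖ ≤ ∑ i, ∑ j, ‖A i j‖ := by
  conv_lhs => rw [Matrix.matrix_eq_sum_single A]
  exact norm_sum_le_of_le _ fun i _ => norm_sum_le_of_le _ fun j _ => norm_single_le i j _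

/-- Tensoring with the identity, as a star homomorphism. -/
noncomputable def kroneckerOneHom (n l : Type*) [Fintype n] [DecidableEq n] [Fintype l]
    [DecidableEq l] : Matrix n n ℂ →⋆ₐ[ℂ] Matrix (n × l) (n × l) ℂ where
  toFun A := A ⊗ₖ (1 : Matrix l l ℂ)
  map_one' := Matrix.one_kronecker_one
  map_mul' A B := by rw [← Matrix.mul_kronecker_mul, one_mul]
  map_zero' := Matrix.zero_kronecker _
  map_add' A B := Matrix.add_kronecker _ _ _
  commutes' r := by simp [Algebra.algebraMap_eq_smul_one, Matrix.smul_kronecker]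
  map_star' A := by simp [Matrix.star_eq_conjTranspose, Matrix.conjTranspose_kronecker]

theorem norm_kronecker_one_le {n l : Type*} [Fintype n] [DecidableEq n] [Fintype l]
    [DecidableEq l] (A : Matrix n n ℂ) : ‖A ⊗ₖ (1 : Matrix l l ℂ)‖ ≤ ‖A‖ :=
  NonUnitalStarAlgHom.norm_apply_le (kroneckerOneHom n l) A

theorem kronecker_one_mem_unitaryGroup {n l : Type*} [Fintype n] [DecidableEq n] [Fintype l]
    [DecidableEq l] {U : Matrix n n ℂ} (hU : U ∈ Matrix.unitaryGroup n ℂ) :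
    U ⊗ₖ (1 : Matrix l l ℂ) ∈ Matrix.unitaryGroup (n × l) ℂ :=
  Unitary.map_mem (kroneckerOneHom n l) hU

section Circuit

variable {m : ℕ} {V : ℕ → Matrix (Fin 4 × Fin m) (Fin 4 × Fin m) ℂ} {T : ℕ}

theorem circuit_mem_unitaryGroup (hV : ∀ s ≤ T, V s ∈ Matrix.unitaryGroup (Fin 4 × Fin m) ℂ)
    {U : ℕ → Matrix (Fin 4) (Fin 4) ℂ} (hU : ∀ t < T, U t ∈ Matrix.unitaryGroup (Fin 4) ℂ) :
    ∀ s ≤ T, circuit V U s ∈ Matrix.unitaryGroup (Fin 4 × Fin m) ℂ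
  | 0, _ => hV 0 (Nat.zero_le _)
  | s + 1, hs => mul_mem (mul_mem (hV _ hs) (kronecker_one_mem_unitaryGroup (hU s hs)))
      (circuit_mem_unitaryGroup hV hU s (by omega))

/-- The circuit is 1-Lipschitz in the sum of the gate distances. -/
theorem norm_circuit_sub_le (hV : ∀ s ≤ T, V s ∈ Matrix.unitaryGroup (Fin 4 × Fin m) ℂ)
    {U W : ℕ → Matrix (Fin 4) (Fin 4) ℂ} (hU : ∀ t < T, U t ∈ Matrix.unitaryGroup (Fin 4) ℂ)
    (hW : ∀ t < T, W t ∈ Matrix.unitaryGroup (Fin 4) ℂ) {ε : ℝ}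
    (hε : ∀ t < T, ‖U t - W t‖ ≤ ε) :
    ∀ s ≤ T, ‖circuit V U s - circuit V W s‖ ≤ s * ε
  | 0, _ => by simp [circuit]
  | s + 1, hs => by
    have ih := norm_circuit_sub_le hV hU hW hε s (by omega)
    have hs' : s < T := hs
    have hsplit : circuit V U (s + 1) - circuit V W (s + 1) =
        V (s + 1) * (((U s - W s) ⊗ₖ (1 : Matrix (Fin m) (Fin m) ℂ)) * circuit V U s +
          (W s ⊗ₖ (1 : Matrix (Fin m) (Fin m) ℂ)) * (circuit V U s - circuit V W s)) := by
      have hk : (U s - W s) ⊗ₖ (1 : Matrix (Fin m) (Fin m) ℂ) =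
          U s ⊗ₖ (1 : Matrix (Fin m) (Fin m) ℂ) - W s ⊗ₖ (1 : Matrix (Fin m) (Fin m) ℂ) :=
        map_sub (kroneckerOneHom (Fin 4) (Fin m)) _ _
      rw [hk]
      simp only [circuit]
      noncomm_ring
    have hF := norm_le_one_of_mem_unitaryGroup (circuit_mem_unitaryGroup hV hU s hs'.le)
    have hVn := norm_le_one_of_mem_unitaryGroup (hV _ hs)
    have hWn := norm_le_one_of_mem_unitaryGroup
      (kronecker_one_mem_unitaryGroup (l := Fin m) (hW s hs'))
    have hd := (norm_kronecker_one_le (l := Fin m) (U s - W s)).trans (hε s hs')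
    rw [hsplit]
    calc _ ≤ 1 * (ε * 1 + 1 * (s * ε)) := by
          refine (norm_mul_le _ _).trans (mul_le_mul hVn ((norm_add_le _ _).trans (add_le_add ?_ ?_))
            (norm_nonneg _) zero_le_one)
          · exact (norm_mul_le _ _).trans
              (mul_le_mul hd hF (norm_nonneg _) ((norm_nonneg _).trans hd))
          · exact (norm_mul_le _ _).trans (mul_le_mul hWn ih (norm_nonneg _) zero_le_one)
      _ = _ := by push_cast; ring

variable {Z : Type*} {O ρ : Z → Matrix (Fin 4 × Fin m) (Fin 4 × Fin m) ℂ} {C : ℝ}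

theorem qloss_eq_trace (U : ℕ → Matrix (Fin 4) (Fin 4) ℂ) (z : Z) :
    qloss V T O ρ U z = (((circuit V U T)ᴴ * O z * circuit V U T * ρ z).trace).re := by
  rw [qloss, Matrix.trace_mul_comm]
  simp only [Matrix.mul_assoc]

theorem abs_qloss_le (hV : ∀ s ≤ T, V s ∈ Matrix.unitaryGroup (Fin 4 × Fin m) ℂ)
    (hρ : ∀ z, (ρ z).PosSemidef ∧ (ρ z).trace = 1) (hO : ∀ z, opNorm (O z) ≤ C)
    {U : ℕ → Matrix (Fin 4) (Fin 4) ℂ} (hU : ∀ t < T, U t ∈ Matrix.unitaryGroup (Fin 4) ℂ)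
    (z : Z) : |qloss V T O ρ U z| ≤ C := by
  have hOz : ‖O z‖ ≤ C := hO z
  have hF := norm_le_one_of_mem_unitaryGroup (circuit_mem_unitaryGroup hV hU T le_rfl)
  have hF' := (Matrix.l2_opNorm_conjTranspose (circuit V U T)).trans_le hF
  have hC := (norm_nonneg _).trans hOz
  rw [qloss_eq_trace]
  calc _ ≤ _ := Complex.abs_re_le_norm _
    _ ≤ _ := norm_trace_mul_le_of_density _ _ (hρ z).1 (hρ z).2
    _ ≤ 1 * C * 1 := (norm_mul_le _ _).trans <| mul_le_mul ((norm_mul_le _ _).trans <|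
        mul_le_mul hF' hOz (norm_nonneg _) zero_le_one) hF (norm_nonneg _) (by linarith)
    _ = C := by ring

theorem abs_qloss_sub_le (hV : ∀ s ≤ T, V s ∈ Matrix.unitaryGroup (Fin 4 × Fin m) ℂ)
    (hρ : ∀ z, (ρ z).PosSemidef ∧ (ρ z).trace = 1) (hO : ∀ z, opNorm (O z) ≤ C)
    {U W : ℕ → Matrix (Fin 4) (Fin 4) ℂ} (hU : ∀ t < T, U t ∈ Matrix.unitaryGroup (Fin 4) ℂ)
    (hW : ∀ t < T, W t ∈ Matrix.unitaryGroup (Fin 4) ℂ) {η : ℝ}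
    (hη : ∀ t < T, ∀ i j, ‖U t i j - W t i j‖ ≤ η) (z : Z) :
    |qloss V T O ρ U z - qloss V T O ρ W z| ≤ 32 * C * (T * η) := by
  have hOz : ‖O z‖ ≤ C := hO z
  have hC := (norm_nonneg _).trans hOz
  have hFU := norm_le_one_of_mem_unitaryGroup (circuit_mem_unitaryGroup hV hU T le_rfl)
  have hFW := norm_le_one_of_mem_unitaryGroup (circuit_mem_unitaryGroup hV hW T le_rfl)
  have hd : ‖circuit V U T - circuit V W T‖ ≤ T * (16 * η) :=
    norm_circuit_sub_le hV hU hW (fun t ht => by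
      refine (norm_le_sum_norm_entries _).trans ?_
      calc _ ≤ ∑ _i : Fin 4, ∑ _j : Fin 4, η :=
            Finset.sum_le_sum fun i _ => Finset.sum_le_sum fun j _ => hη t ht i j
        _ = 16 * η := by simp; ring) T le_rfl
  set F := circuit V U T with hFdef
  set G := circuit V W T with hGdef
  have hG' := (Matrix.l2_opNorm_conjTranspose G).trans_le hFW
  have hd' := (Matrix.l2_opNorm_conjTranspose (F - G)).trans_le hd
  have hdiff : qloss V T O ρ U z - qloss V T O ρ W z =
      ((((F - G)ᴴ * O z * F + Gᴴ * O z * (F - G)) * ρ z).trace).re := by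
    rw [qloss_eq_trace, qloss_eq_trace, ← hFdef, ← hGdef, ← Complex.sub_re, ← Matrix.trace_sub,
      Matrix.conjTranspose_sub]
    congr 2
    noncomm_ring
  have hnn : 0 ≤ T * (16 * η) := (norm_nonneg _).trans hd
  rw [hdiff]
  calc _ ≤ _ := Complex.abs_re_le_norm _
    _ ≤ _ := norm_trace_mul_le_of_density _ _ (hρ z).1 (hρ z).2
    _ ≤ (T * (16 * η)) * C * 1 + 1 * C * (T * (16 * η)) := by
        refine (norm_add_le _ _).trans (add_le_add ?_ ?_)
        · exact (norm_mul_le _ _).trans <| mul_le_mul ((norm_mul_le _ _).trans <|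
            mul_le_mul hd' hOz (norm_nonneg _) hnn) hFU (norm_nonneg _) (by positivity)
        · exact (norm_mul_le _ _).trans <| mul_le_mul ((norm_mul_le _ _).trans <|
            mul_le_mul hG' hOz (norm_nonneg _) zero_le_one) hd (norm_nonneg _) (by linarith)
    _ = _ := by ring

theorem measurable_qloss [MeasurableSpace Z] (hO : ∀ p q, Measurable fun z => O z p q)
    (hρ : ∀ p q, Measurable fun z => ρ z p q) (U : ℕ → Matrix (Fin 4) (Fin 4) ℂ) :
    Measurable (qloss V T O ρ U) := by
  refine Complex.measurable_re.comp ?_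
  simp only [Matrix.trace, Matrix.diag, Matrix.mul_apply]
  fun_prop

end Circuit

end Norms

section Grid

/-- Gate sequences whose first `T` entries are unitary. -/
abbrev GateParams (T : ℕ) : Type :=
  {U : ℕ → Matrix (Fin 4) (Fin 4) ℂ // ∀ t < T, U t ∈ Matrix.unitaryGroup (Fin 4) ℂ}

instance (T : ℕ) : Nonempty (GateParams T) := ⟨⟨fun _ => 1, fun _ _ => one_mem _⟩⟩

variable {T : ℕ}

/-- The real and imaginary parts of the gate entries. -/
noncomputable def gateCoord (U : GateParams T) (p : Fin T × Fin 4 × Fin 4 × Bool) : ℝ :=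
  if p.2.2.2 then (U.1 p.1 p.2.1 p.2.2.1).re else (U.1 p.1 p.2.1 p.2.2.1).im

theorem abs_gateCoord_le (U : GateParams T) (p : Fin T × Fin 4 × Fin 4 × Bool) :
    |gateCoord U p| ≤ 1 := by
  have h := entry_norm_bound_of_unitary (U.2 p.1 p.1.2) p.2.1 p.2.2.1
  unfold gateCoord
  split_ifs
  · exact (Complex.abs_re_le_norm _).trans h
  · exact (Complex.abs_im_le_norm _).trans h

/-- The cell of the grid of mesh `1 / K` containing a parameter. -/
noncomputable def gridCode (K : ℕ) (U : GateParams T) :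
    Fin T × Fin 4 × Fin 4 × Bool → Finset.Icc (-(K : ℤ)) K := fun p =>
  ⟨⌊gateCoord U p * K⌋, by
    obtain ⟨h1, h2⟩ := abs_le.1 (abs_gateCoord_le U p)
    have hK : (0 : ℝ) ≤ K := K.cast_nonneg
    refine Finset.mem_Icc.2 ⟨Int.le_floor.2 ?_, Int.floor_le_iff.2 ?_⟩
    · push_cast; nlinarith
    · push_cast; nlinarith⟩

theorem norm_entry_sub_le_of_gridCode_eq {K : ℕ} (hK : 0 < K) {U W : GateParams T}
    (h : gridCode K U = gridCode K W) {t : ℕ} (ht : t < T) (i j : Fin 4) :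
    ‖U.1 t i j - W.1 t i j‖ ≤ 2 / K := by
  have hK' : (0 : ℝ) < K := by exact_mod_cast hK
  have hcoord : ∀ p, |gateCoord U p - gateCoord W p| ≤ 1 / K := by
    intro p
    have hp : ⌊gateCoord U p * K⌋ = ⌊gateCoord W p * K⌋ :=
      congrArg Subtype.val (congrFun h p)
    have := (Int.abs_sub_lt_one_of_floor_eq_floor hp).le
    rwa [← sub_mul, abs_mul, abs_of_pos hK', ← le_div_iff₀ hK'] at this
  have hre := hcoord (⟨t, ht⟩, i, j, true)
  have him := hcoord (⟨t, ht⟩, i, j, false)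
  simp only [gateCoord, if_true, Bool.false_eq_true, if_false, ← Complex.sub_re,
    ← Complex.sub_im] at hre him
  calc _ ≤ _ := Complex.norm_le_abs_re_add_abs_im _
    _ ≤ 1 / K + 1 / K := add_le_add hre him
    _ = 2 / K := by ring

/-- A representative parameter of a grid cell. -/
noncomputable def gridPoint (K : ℕ) :
    (Fin T × Fin 4 × Fin 4 × Bool → Finset.Icc (-(K : ℤ)) K) → GateParams T :=
  Function.invFun (gridCode K)

theorem gridCode_gridPoint_gridCode (K : ℕ) (U : GateParams T) :
    gridCode K (gridPoint K (gridCode K U)) = gridCode K U :=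
  Function.invFun_eq ⟨U, rfl⟩

theorem card_gridCode_le (hT : 0 < T) (k : ℕ) :
    (Fintype.card (Fin T × Fin 4 × Fin 4 × Bool →
      Finset.Icc (-((2 ^ k * T : ℕ) : ℤ)) (2 ^ k * T : ℕ)) : ℝ) ≤
        Real.exp (64 * (T * (1 + Real.log T)) * (k + 1)) := by
  have hT' : (1 : ℝ) ≤ T := by exact_mod_cast hT
  have hlog := Real.log_nonneg hT'
  have hcard : Fintype.card (Fin T × Fin 4 × Fin 4 × Bool →
      Finset.Icc (-((2 ^ k * T : ℕ) : ℤ)) (2 ^ k * T : ℕ)) = (2 * (2 ^ k * T) + 1) ^ (32 * T) := by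
    rw [Fintype.card_fun, Fintype.card_coe, Int.card_Icc]
    simp only [Fintype.card_prod, Fintype.card_fin, Fintype.card_bool]
    congr 1 <;> omega
  have hbase : (2 * (2 ^ k * T) + 1 : ℝ) ≤ Real.exp (2 * (1 + Real.log T) * (k + 1)) := by
    have h2 : (2 : ℝ) ≤ Real.exp 1 := by linarith [Real.add_one_le_exp (1 : ℝ)]
    have hk : (2 : ℝ) ^ k ≤ Real.exp k := by
      rw [← Real.exp_one_pow]; gcongr
    have h3 : (3 : ℝ) ≤ Real.exp 2 := by linarith [Real.add_one_le_exp (2 : ℝ)]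
    have hpow : (1 : ℝ) ≤ 2 ^ k := one_le_pow₀ one_le_two
    calc (2 * (2 ^ k * T) + 1 : ℝ) ≤ 3 * 2 ^ k * T := by nlinarith
      _ ≤ Real.exp 2 * Real.exp k * Real.exp (Real.log T) := by
        rw [Real.exp_log (by linarith)]; gcongr
      _ = Real.exp (2 + k + Real.log T) := by rw [Real.exp_add, Real.exp_add]
      _ ≤ _ := Real.exp_le_exp.2 (by
        have : (0 : ℝ) ≤ k := k.cast_nonneg
        nlinarith [mul_nonneg hlog this])
  rw [hcard]
  push_cast
  calc _ ≤ Real.exp (2 * (1 + Real.log T) * (k + 1)) ^ (32 * T) := by gcongr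
    _ = _ := by rw [← Real.exp_nat_mul]; congr 1; push_cast; ring

end Grid

/-- Generalization bound `√(T(1+log T)/N) + √(log(2/δ)/N)` for a fixed-architecture basic
variational quantum machine learning model with `T` trainable 2-qubit gates. -/
theorem basic_qmlm_generalization :
    ∃ c : ℝ, 0 < c ∧
      ∀ (m T N : ℕ), 0 < m → 0 < T → 0 < N →
      ∀ V : ℕ → Matrix (Fin 4 × Fin m) (Fin 4 × Fin m) ℂ,
        (∀ s ≤ T, V s ∈ Matrix.unitaryGroup (Fin 4 × Fin m) ℂ) →
      ∀ (Z : Type) (_ : MeasurableSpace Z) (μ : Measure Z), IsProbabilityMeasure μ →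
      ∀ ρ : Z → Matrix (Fin 4 × Fin m) (Fin 4 × Fin m) ℂ,
        (∀ p q, Measurable fun z => ρ z p q) →
        (∀ z, (ρ z).PosSemidef ∧ (ρ z).trace = 1) →
      ∀ C : ℝ, 0 < C →
      ∀ O : Z → Matrix (Fin 4 × Fin m) (Fin 4 × Fin m) ℂ,
        (∀ p q, Measurable fun z => O z p q) →
        (∀ z, (O z).IsHermitian ∧ opNorm (O z) ≤ C) →
      ∀ δ : ℝ, 0 < δ → δ < 1 →
        ENNReal.ofReal (1 - δ) ≤
          (Measure.pi fun _ : Fin N => μ) {S | ∀ U : ℕ → Matrix (Fin 4) (Fin 4) ℂ,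
            (∀ t < T, U t ∈ Matrix.unitaryGroup (Fin 4) ℂ) →
            (∫ z, qloss V T O ρ U z ∂μ) - (1 / N) * ∑ i, qloss V T O ρ U (S i)
              ≤ c * C * (Real.sqrt (T * (1 + Real.log T) / N)
                  + Real.sqrt (Real.log (2 / δ) / N))} := by
  refine ⟨18432, by norm_num, ?_⟩
  intro m T N hm hT hN V hV Z _ μ _ ρ hρm hρ C hC O hOm hO δ hδ hδ1
  have hO' : ∀ z, opNorm (O z) ≤ C := fun z => (hO z).2
  have hT' : (1 : ℝ) ≤ T := by exact_mod_cast hT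
  have hlog := Real.log_nonneg hT'
  let K : ℕ → ℕ := fun k => 2 ^ k * T
  let loss : GateParams T → Z → ℝ := fun U => qloss V T O ρ U.1
  let snap : ℕ → GateParams T → GateParams T := fun k U => gridPoint (K k) (gridCode (K k) U)
  let g : ℕ → GateParams T → Z → ℝ := fun k => match k with
    | 0 => fun U => loss (snap 0 U)
    | k + 1 => fun U => loss (snap (k + 1) U) - loss (snap k U)
  have hmeas : ∀ U, Measurable (loss U) := fun U => measurable_qloss hOm hρm U.1
  have hsnap : ∀ k U z, |loss (snap k U) z - loss U z| ≤ 64 * C * (1 / 2) ^ k := by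
    intro k U z
    have h := abs_qloss_sub_le hV hρ hO' (snap k U).2 U.2 (η := 2 / (K k : ℝ))
      (fun t ht i j => norm_entry_sub_le_of_gridCode_eq (Nat.mul_pos (by positivity) hT)
        (gridCode_gridPoint_gridCode (K k) U) ht i j) z
    refine h.trans (le_of_eq ?_)
    simp only [K, one_div, inv_pow]
    push_cast
    field_simp
    norm_num
  have hbound : ∀ k U z, |g k U z| ≤ 192 * C * (1 / 2) ^ k := by
    rintro (_ | k) U z
    · have := abs_qloss_le hV hρ hO' (snap 0 U).2 z
      simp only [pow_zero, mul_one]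
      exact this.trans (by linarith)
    · have h1 := abs_le.1 (hsnap (k + 1) U z)
      have h2 := abs_le.1 (hsnap k U z)
      simp only [g, Pi.sub_apply]
      rw [pow_succ] at h1 ⊢
      exact abs_le.2 ⟨by linarith, by linarith⟩
  have hpartial : ∀ n U z, ∑ k ∈ Finset.range (n + 1), g k U z = loss (snap n U) z := by
    intro n U z
    induction n with
    | zero => simp [g]
    | succ n ih => rw [Finset.sum_range_succ, ih]; simp [g]
  have hsum : ∀ U z, HasSum (fun k => g k U z) (loss U z) := by
    intro U z
    have hs : Summable fun k => g k U z :=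
      .of_norm_bounded (summable_geometric_two.mul_left (192 * C)) fun k => hbound k U z
    have hlim : Filter.Tendsto (fun n => loss (snap n U) z) Filter.atTop (nhds (loss U z)) := by
      refine tendsto_iff_norm_sub_tendsto_zero.2 (squeeze_zero (fun _ => norm_nonneg _)
        (fun n => hsnap n U z) ?_)
      simpa using (tendsto_pow_atTop_nhds_zero_of_lt_one (r := (1 / 2 : ℝ)) (by norm_num)
        (by norm_num)).const_mul (64 * C)
    have hlim' := (Filter.tendsto_add_atTop_iff_nat 1).2 hs.hasSum.tendsto_sum_nat
    simp only [hpartial] at hlim'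
    rw [← tendsto_nhds_unique hlim' hlim]
    exact hs.hasSum
  have hrange : ∀ k, (Set.range (g k)).Finite ∧ ((Set.range (g k)).ncard : ℝ) ≤
      Real.exp (128 * (T * (1 + Real.log T)) * (k + 1)) := by
    have hL : 0 ≤ T * (1 + Real.log T) := by positivity
    have hcount : ∀ {α : Type} [Fintype α] (h : α → Z → ℝ) (s : Set (Z → ℝ)),
        s ⊆ Set.range h → s.Finite ∧ (s.ncard : ℝ) ≤ Fintype.card α := by
      intro α _ h s hs
      refine ⟨(Set.finite_range h).subset hs, Nat.cast_le.2 ?_⟩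
      refine (Set.ncard_le_ncard hs (Set.finite_range h)).trans ?_
      rw [← Set.image_univ, ← Nat.card_eq_fintype_card, ← Set.ncard_univ]
      exact Set.ncard_image_le
    rintro (_ | k)
    · obtain ⟨h1, h2⟩ := hcount (fun c => loss (gridPoint (K 0) c)) (Set.range (g 0)) (by
        rintro _ ⟨U, rfl⟩
        exact ⟨gridCode (K 0) U, rfl⟩)
      refine ⟨h1, h2.trans ((card_gridCode_le hT 0).trans (Real.exp_le_exp.2 ?_))⟩
      push_cast
      nlinarith
    · obtain ⟨h1, h2⟩ := hcount (fun c : _ × _ =>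
        loss (gridPoint (K (k + 1)) c.1) - loss (gridPoint (K k) c.2)) (Set.range (g (k + 1))) (by
          rintro _ ⟨U, rfl⟩
          exact ⟨(gridCode (K (k + 1)) U, gridCode (K k) U), rfl⟩)
      refine ⟨h1, h2.trans ?_⟩
      rw [Fintype.card_prod]
      push_cast
      refine (mul_le_mul (card_gridCode_le hT (k + 1)) (card_gridCode_le hT k) (by positivity)
        (by positivity)).trans ?_
      rw [← Real.exp_add]
      refine Real.exp_le_exp.2 ?_
      push_cast
      nlinarith
  have hgmeas : ∀ k U, Measurable (g k U) := by
    rintro (_ | k) U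
    · exact hmeas _
    · exact (hmeas _).sub (hmeas _)
  have hmain := chaining_deviation_bound μ hN loss g (by positivity) (by positivity) hδ hδ1 hgmeas
    hbound (fun k => (hrange k).1) (fun k => (hrange k).2) hsum
  refine hmain.trans (measure_mono fun S hS U hU => (hS ⟨U, hU⟩).trans ?_)
  have hsqrt : Real.sqrt (128 * (T * (1 + Real.log T)) / N) ≤
      12 * Real.sqrt (T * (1 + Real.log T) / N) := by
    rw [mul_div_assoc, Real.sqrt_mul (by norm_num)]
    gcongr
    exact Real.sqrt_le_iff.2 ⟨by norm_num, by norm_num⟩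
  have hnn := Real.sqrt_nonneg (Real.log (2 / δ) / N)
  calc _ ≤ 8 * (192 * C) * (12 * Real.sqrt (T * (1 + Real.log T) / N) +
        12 * Real.sqrt (Real.log (2 / δ) / N)) := by
        gcongr
        linarith
    _ = _ := by ring
end

section
/- Uniform deviation bound in terms of empirical Rademacher averages: let Z be a measurable space with probability measure μ, let Θ be a countable nonempty index set, let C > 0, and let f_θ : Z → ℝ (θ ∈ Θ) be measurable functions with |f_θ(z)| ≤ C for all θ and z. For a sample S = (z_1,…,z_N) ∈ Z^N define the empirical Rademacher average 𝔼_σ[sup_{θ∈Θ} (1/N) Σ_{i=1}^N σ_i f_θ(z_i)] := 2^{−N} Σ_{σ ∈ {−1,1}^N} sup_{θ∈Θ} (1/N) Σ_{i=1}^N σ_i f_θ(z_i). Then for every positive integer N and every δ ∈ (0,1), with probability at least 1 − δ over S drawn from μ^{⊗N}: sup_{θ∈Θ} ( ∫ f_θ dμ − (1/N) Σ_{i=1}^N f_θ(z_i) ) ≤ 2 𝔼_σ[sup_{θ∈Θ} (1/N) Σ_{i=1}^N σ_i f_θ(z_i)] + 3C √(2 log(2/δ)/N). -/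
open MeasureTheory ProbabilityTheory

lemma abs_iSup_le_of_forall_abs_le {ι : Type*} [Nonempty ι] {u : ι → ℝ} {K : ℝ}
    (hu : ∀ i, |u i| ≤ K) : |⨆ i, u i| ≤ K := by
  have hbdd : BddAbove (Set.range u) := ⟨K, by rintro _ ⟨i, rfl⟩; exact (abs_le.1 (hu i)).2⟩
  obtain ⟨i⟩ := ‹Nonempty ι›
  have : Nonempty ι := ⟨i⟩
  exact abs_le.2 ⟨(abs_le.1 (hu i)).1.trans (le_ciSup hbdd i),
    ciSup_le fun j => (abs_le.1 (hu j)).2⟩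

lemma abs_iSup_sub_iSup_le {ι : Type*} [Nonempty ι] {u v : ι → ℝ} {K d : ℝ}
    (hu : ∀ i, |u i| ≤ K) (hv : ∀ i, |v i| ≤ K) (huv : ∀ i, |u i - v i| ≤ d) :
    |(⨆ i, u i) - ⨆ i, v i| ≤ d := by
  have bdd : ∀ {w : ι → ℝ}, (∀ i, |w i| ≤ K) → BddAbove (Set.range w) := fun hw =>
    ⟨K, by rintro _ ⟨i, rfl⟩; exact (abs_le.1 (hw i)).2⟩
  have h₁ : ⨆ i, u i ≤ (⨆ i, v i) + d := ciSup_le fun i => by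
    linarith [le_ciSup (bdd hv) i, (abs_le.1 (huv i)).2]
  have h₂ : ⨆ i, v i ≤ (⨆ i, u i) + d := ciSup_le fun i => by
    linarith [le_ciSup (bdd hu) i, (abs_le.1 (huv i)).1]
  exact abs_le.2 ⟨by linarith, by linarith⟩

lemma integrable_of_measurable_of_abs_le {α : Type*} [MeasurableSpace α] {ν : Measure α}
    [IsFiniteMeasure ν] {g : α → ℝ} {B : ℝ} (hg : Measurable g) (hB : ∀ x, |g x| ≤ B) :
    Integrable g ν :=
  Integrable.of_bound hg.aestronglyMeasurable B (ae_of_all _ hB)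

lemma abs_integral_le_of_forall_abs_le {α : Type*} [MeasurableSpace α] {ν : Measure α}
    [IsProbabilityMeasure ν] {g : α → ℝ} {B : ℝ} (hB : ∀ x, |g x| ≤ B) : |∫ x, g x ∂ν| ≤ B := by
  simpa using norm_integral_le_of_norm_le_const (μ := ν) (f := g) (ae_of_all _ hB)

lemma MeasureTheory.MeasurePreserving.integral_comp_of_measurable {α β : Type*}
    [MeasurableSpace α] [MeasurableSpace β] {ν : Measure α} {ρ : Measure β} {T : α → β}
    (hT : MeasurePreserving T ν ρ) {g : β → ℝ} (hg : Measurable g) :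
    ∫ x, g (T x) ∂ν = ∫ y, g y ∂ρ := by
  rw [← hT.map_eq, integral_map hT.measurable.aemeasurable hg.aestronglyMeasurable]

lemma measurePreserving_fin_cons {Z : Type*} [MeasurableSpace Z] (μ : Measure Z)
    [IsProbabilityMeasure μ] (n : ℕ) :
    MeasurePreserving (fun p : Z × (Fin n → Z) => (Fin.cons p.1 p.2 : Fin (n + 1) → Z))
      (μ.prod (Measure.pi fun _ => μ)) (Measure.pi fun _ => μ) := by
  have h := (measurePreserving_piFinSuccAbove (fun _ : Fin (n + 1) => μ) 0).symm
  convert h using 1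
  ext p : 1
  simp [MeasurableEquiv.piFinSuccAbove_symm_apply, Fin.insertNthEquiv]

/-- Hoeffding's lemma in terms of the oscillation of the function. -/
lemma hasSubgaussianMGF_of_oscillation_le {Z : Type*} [MeasurableSpace Z] (μ : Measure Z)
    [IsProbabilityMeasure μ] {h : Z → ℝ} (hm : Measurable h) {c : NNReal}
    (hosc : ∀ z z', |h z - h z'| ≤ c) :
    HasSubgaussianMGF (fun z => h z - ∫ x, h x ∂μ) ((c / 2) ^ 2) μ := by
  have : Nonempty Z := nonempty_of_isProbabilityMeasure μ
  obtain ⟨z₀⟩ := this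
  have hbdd : BddBelow (Set.range h) :=
    ⟨h z₀ - c, by rintro _ ⟨z, rfl⟩; linarith [(abs_le.1 (hosc z₀ z)).2]⟩
  have : Nonempty Z := ⟨z₀⟩
  have key := hasSubgaussianMGF_of_mem_Icc (μ := μ) (X := h) (a := ⨅ z, h z)
    (b := (⨅ z, h z) + c) hm.aemeasurable (ae_of_all _ fun z => ⟨ciInf_le hbdd z, by
      have : h z - c ≤ ⨅ z, h z := le_ciInf fun z' => by linarith [(abs_le.1 (hosc z z')).2]
      linarith⟩)
  simpa using key

/-- **McDiarmid's inequality**, at the level of moment generating functions. -/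
lemma hasSubgaussianMGF_of_bounded_differences {Z : Type*} [MeasurableSpace Z] (μ : Measure Z)
    [IsProbabilityMeasure μ] (c : NNReal) (B : ℝ) (n : ℕ) (g : (Fin n → Z) → ℝ)
    (hm : Measurable g) (hB : ∀ S, |g S| ≤ B)
    (hdiff : ∀ S i z, |g (Function.update S i z) - g S| ≤ c) :
    HasSubgaussianMGF (fun S => g S - ∫ S', g S' ∂(Measure.pi fun _ : Fin n => μ))
      (n * (c / 2) ^ 2) (Measure.pi fun _ : Fin n => μ) := by
  induction n with
  | zero =>
    have hg : g = fun _ => g default := funext fun S => congrArg g (Subsingleton.elim _ _)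
    rw [hg]
    simp
  | succ n ih =>
    set P := Measure.pi fun _ : Fin n => μ
    set Q := Measure.pi fun _ : Fin (n + 1) => μ
    have hcons := measurePreserving_fin_cons μ n
    have hgm : Measurable fun p : Z × (Fin n → Z) => g (Fin.cons p.1 p.2) :=
      hm.comp hcons.measurable
    have hgz : ∀ z, Measurable fun S : Fin n → Z => g (Fin.cons z S) := fun z =>
      hgm.comp measurable_prodMk_left
    have hgi : ∀ z, Integrable (fun S : Fin n → Z => g (Fin.cons z S)) P := fun z =>
      integrable_of_measurable_of_abs_le (hgz z) fun S => hB _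
    set h : Z → ℝ := fun z => ∫ S, g (Fin.cons z S) ∂P with hh
    have hhm : Measurable h := hgm.stronglyMeasurable.integral_prod_right.measurable
    have hfub : ∫ S, g S ∂Q = ∫ z, h z ∂μ := by
      rw [← hcons.integral_comp_of_measurable hm, integral_prod]
      exact integrable_of_measurable_of_abs_le hgm fun _ => hB _
    have hhead : HasSubgaussianMGF (fun z => h z - ∫ x, h x ∂μ) ((c / 2) ^ 2) μ := by
      refine hasSubgaussianMGF_of_oscillation_le μ hhm fun z z' => ?_
      rw [hh, ← integral_sub (hgi z) (hgi z')]
      refine abs_integral_le_of_forall_abs_le fun S => ?_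
      have := hdiff (Fin.cons z' S) 0 z
      rwa [Fin.update_cons_zero] at this
    have htail : ∀ z, HasSubgaussianMGF (fun S => g (Fin.cons z S) - h z) (n * (c / 2) ^ 2) P :=
      fun z => ih (fun S => g (Fin.cons z S)) (hgz z) (fun _ => hB _) fun S i y => by
        have := hdiff (Fin.cons z S) i.succ y
        rwa [← Fin.cons_update] at this
    set m := ∫ S, g S ∂Q
    have hexpm : ∀ t, Measurable fun S => Real.exp (t * (g S - m)) := fun t => by fun_prop
    have hexpi : ∀ t, ∀ (ν : Measure (Fin (n + 1) → Z)) [IsFiniteMeasure ν],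
        Integrable (fun S => Real.exp (t * (g S - m))) ν := fun t ν _ => by
      refine integrable_of_measurable_of_abs_le (B := Real.exp (|t| * (B + |m|))) (hexpm t)
        fun S => ?_
      rw [Real.abs_exp, Real.exp_le_exp]
      refine (le_abs_self _).trans ?_
      rw [abs_mul]
      gcongr
      exact (abs_sub _ _).trans (by gcongr; exact hB S)
    refine ⟨fun t => hexpi t Q, fun t => ?_⟩
    have hint : Integrable (fun p : Z × (Fin n → Z) => Real.exp (t * (g (Fin.cons p.1 p.2) - m)))
        (μ.prod P) := hcons.integrable_comp_of_integrable (hexpi t Q)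
    calc mgf (fun S => g S - m) Q t
        = ∫ z, ∫ S, Real.exp (t * (g (Fin.cons z S) - m)) ∂P ∂μ := by
          rw [mgf, ← hcons.integral_comp_of_measurable (hexpm t), integral_prod _ hint]
      _ ≤ ∫ z, Real.exp (t * (h z - m)) * Real.exp ((n * (c / 2) ^ 2 : NNReal) * t ^ 2 / 2) ∂μ := by
          refine integral_mono hint.integral_prod_left ?_ fun z => ?_
          · rw [hfub]
            exact (hhead.integrable_exp_mul t).mul_const _
          · have hz : ∀ S : Fin n → Z, Real.exp (t * (g (Fin.cons z S) - m))
                = Real.exp (t * (h z - m)) * Real.exp (t * (g (Fin.cons z S) - h z)) := fun S => by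
              rw [← Real.exp_add]
              ring_nf
            simp only [hz, integral_const_mul]
            gcongr
            exact (htail z).mgf_le t
      _ ≤ Real.exp (((c / 2) ^ 2 : NNReal) * t ^ 2 / 2)
            * Real.exp ((n * (c / 2) ^ 2 : NNReal) * t ^ 2 / 2) := by
          rw [integral_mul_const, hfub]
          gcongr
          exact hhead.mgf_le t
      _ = Real.exp (((n + 1 : ℕ) * (c / 2) ^ 2 : NNReal) * t ^ 2 / 2) := by
          rw [← Real.exp_add]
          push_cast
          ring_nf

section WeightedSup

variable {Z Θ : Type*} {C : ℝ} {f : Θ → Z → ℝ} {N : ℕ}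

lemma abs_weighted_average_le (hbd : ∀ θ z, |f θ z| ≤ C) (hN : 0 < N)
    {a : Fin N → ℝ} (ha : ∀ i, |a i| ≤ 1) (θ : Θ) (S : Fin N → Z) :
    |(1 / N : ℝ) * ∑ i, a i * f θ (S i)| ≤ C := by
  have hN' : (0 : ℝ) < N := by exact_mod_cast hN
  have hsum : |∑ i, a i * f θ (S i)| ≤ N * C := by
    refine (Finset.abs_sum_le_sum_abs _ _).trans ?_
    refine (Finset.sum_le_card_nsmul _ _ C fun i _ => ?_).trans (by simp)
    rw [abs_mul]
    exact (mul_le_of_le_one_left (abs_nonneg _) (ha i)).trans (hbd θ _)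
  rw [abs_mul, abs_of_pos (by positivity), one_div, inv_mul_le_iff₀ hN']
  exact hsum

lemma abs_weighted_average_update_sub_le (hbd : ∀ θ z, |f θ z| ≤ C)
    {a : Fin N → ℝ} (ha : ∀ i, |a i| ≤ 1) (θ : Θ) (S : Fin N → Z) (i : Fin N) (z : Z) :
    |(1 / N : ℝ) * ∑ j, a j * f θ (Function.update S i z j)
      - (1 / N : ℝ) * ∑ j, a j * f θ (S j)| ≤ 2 * C / N := by
  rw [← mul_sub, ← Finset.sum_sub_distrib, Finset.sum_eq_single i
    (fun j _ hj => by simp [Function.update_of_ne hj]) (by simp), Function.update_self, ← mul_sub,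
    abs_mul, abs_mul, abs_of_nonneg (by positivity), one_div, div_eq_inv_mul]
  refine mul_le_mul_of_nonneg_left ?_ (by positivity)
  refine (mul_le_of_le_one_left (abs_nonneg _) (ha i)).trans ?_
  linarith [abs_sub (f θ z) (f θ (S i)), hbd θ z, hbd θ (S i)]

/-- Supremum over `θ` of an offset plus a weighted average of the values of `f θ` on a sample. -/
noncomputable def weightedSup (f : Θ → Z → ℝ) (b : Θ → ℝ) (a : Fin N → ℝ) (S : Fin N → Z) : ℝ :=
  ⨆ θ, (b θ + (1 / N : ℝ) * ∑ i, a i * f θ (S i))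

variable {b : Θ → ℝ} {a : Fin N → ℝ}

lemma measurable_weightedSup [MeasurableSpace Z] [Countable Θ] (hmeas : ∀ θ, Measurable (f θ)) :
    Measurable (weightedSup f b a) := by
  unfold weightedSup
  exact Measurable.iSup fun θ => by fun_prop

lemma abs_offset_add_weighted_average_le (hbd : ∀ θ z, |f θ z| ≤ C) (hN : 0 < N)
    (hb : ∀ θ, |b θ| ≤ C) (ha : ∀ i, |a i| ≤ 1) (θ : Θ) (S : Fin N → Z) :
    |b θ + (1 / N : ℝ) * ∑ i, a i * f θ (S i)| ≤ 2 * C :=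
  (abs_add_le _ _).trans (by linarith [hb θ, abs_weighted_average_le hbd hN ha θ S])

lemma abs_weightedSup_le [Nonempty Θ] (hbd : ∀ θ z, |f θ z| ≤ C) (hN : 0 < N)
    (hb : ∀ θ, |b θ| ≤ C) (ha : ∀ i, |a i| ≤ 1) (S : Fin N → Z) :
    |weightedSup f b a S| ≤ 2 * C :=
  abs_iSup_le_of_forall_abs_le fun θ => abs_offset_add_weighted_average_le hbd hN hb ha θ S

lemma abs_weightedSup_update_sub_le [Nonempty Θ] (hbd : ∀ θ z, |f θ z| ≤ C) (hN : 0 < N)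
    (hb : ∀ θ, |b θ| ≤ C) (ha : ∀ i, |a i| ≤ 1) (S : Fin N → Z) (i : Fin N) (z : Z) :
    |weightedSup f b a (Function.update S i z) - weightedSup f b a S| ≤ 2 * C / N :=
  abs_iSup_sub_iSup_le (fun θ => abs_offset_add_weighted_average_le hbd hN hb ha θ _)
    (fun θ => abs_offset_add_weighted_average_le hbd hN hb ha θ _) fun θ => by
      rw [add_sub_add_left_eq_sub]
      exact abs_weighted_average_update_sub_le hbd ha θ S i z

end WeightedSup

/-- The real sign encoded by a Boolean. -/
def boolSign (s : Bool) : ℝ := if s then 1 else -1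

lemma abs_boolSign (s : Bool) : |boolSign s| = 1 := by cases s <;> simp [boolSign]

section Symmetrization

variable {Z Θ : Type*} [MeasurableSpace Z] [Countable Θ] [Nonempty Θ] {C : ℝ} {f : Θ → Z → ℝ}
  {N : ℕ}

lemma measurable_exchange_coordinates (σ : Fin N → Bool) :
    Measurable fun p : (Fin N → Z) × (Fin N → Z) =>
      ((fun i => if σ i then p.1 i else p.2 i, fun i => if σ i then p.2 i else p.1 i) :
        (Fin N → Z) × (Fin N → Z)) := by
  refine Measurable.prodMk ?_ ?_ <;> refine measurable_pi_lambda _ fun i => ?_ <;>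
    cases σ i <;> simp <;> fun_prop

/-- Exchanging the coordinates of two independent samples where the sign is negative preserves
their joint law. -/
lemma integral_exchange_coordinates (μ : Measure Z) [IsProbabilityMeasure μ] (σ : Fin N → Bool)
    {F : (Fin N → Z) × (Fin N → Z) → ℝ} (hF : Measurable F) :
    ∫ p, F p ∂((Measure.pi fun _ : Fin N => μ).prod (Measure.pi fun _ : Fin N => μ)) =
      ∫ p, F (fun i => if σ i then p.1 i else p.2 i, fun i => if σ i then p.2 i else p.1 i)
        ∂((Measure.pi fun _ : Fin N => μ).prod (Measure.pi fun _ : Fin N => μ)) := by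
  have hE := measurePreserving_arrowProdEquivProdArrow Z Z (Fin N) (fun _ => μ) (fun _ => μ)
  have hs : MeasurePreserving (fun (w : Fin N → Z × Z) i => (if σ i then id else Prod.swap) (w i))
      (Measure.pi fun _ => μ.prod μ) (Measure.pi fun _ => μ.prod μ) := by
    refine measurePreserving_pi (fun _ : Fin N => μ.prod μ) (fun _ => μ.prod μ) fun i => ?_
    cases σ i
    · exact Measure.measurePreserving_swap
    · exact MeasurePreserving.id _
  rw [← (hE.comp hs).integral_comp_of_measurable hF]
  refine Eq.trans ?_
    (hE.integral_comp_of_measurable (hF.comp (measurable_exchange_coordinates σ)))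
  refine integral_congr_ae (ae_of_all _ fun w => congrArg F ?_)
  ext i <;> cases h : σ i <;>
    simp [MeasurableEquiv.arrowProdEquivProdArrow, Equiv.arrowProdEquivProdArrow, h]

/-- Symmetrization by a ghost sample, for a fixed sign pattern. -/
lemma integral_weightedSup_deviation_le (μ : Measure Z) [IsProbabilityMeasure μ]
    (hmeas : ∀ θ, Measurable (f θ)) (hbd : ∀ θ z, |f θ z| ≤ C) (hN : 0 < N) (hC : 0 ≤ C)
    (σ : Fin N → Bool) :
    ∫ S, weightedSup f (fun θ => ∫ z, f θ z ∂μ) (fun _ : Fin N => -1) S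
        ∂(Measure.pi fun _ : Fin N => μ) ≤
      ∫ S, weightedSup f (fun _ => 0) (fun i => boolSign (σ i)) S ∂(Measure.pi fun _ : Fin N => μ)
      + ∫ S, weightedSup f (fun _ => 0) (fun i => boolSign (!σ i)) S
        ∂(Measure.pi fun _ : Fin N => μ) := by
  set P := Measure.pi fun _ : Fin N => μ
  have hN' : (N : ℝ) ≠ 0 := by exact_mod_cast hN.ne'
  have hR : ∀ θ, |∫ z, f θ z ∂μ| ≤ C := fun θ =>
    abs_integral_le_of_forall_abs_le (hbd θ)
  have hsgn : ∀ (τ : Fin N → Bool) i, |boolSign (τ i)| ≤ 1 := fun τ i => (abs_boolSign _).le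
  let d : Θ → (Fin N → Z) × (Fin N → Z) → ℝ := fun θ p =>
    (1 / N : ℝ) * ∑ i, 1 * f θ (p.1 i) + (1 / N : ℝ) * ∑ i, (-1) * f θ (p.2 i)
  have hd : ∀ θ p, |d θ p| ≤ 2 * C := fun θ p => (abs_add_le _ _).trans (by
    linarith [abs_weighted_average_le hbd hN (a := fun _ => 1) (by simp) θ p.1,
      abs_weighted_average_le hbd hN (a := fun _ => -1) (by simp) θ p.2])
  have hdm : ∀ θ, Measurable (d θ) := fun θ => by fun_prop
  have hDm : Measurable fun p => ⨆ θ, d θ p := Measurable.iSup hdm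
  have hDb : ∀ p, |⨆ θ, d θ p| ≤ 2 * C := fun p => abs_iSup_le_of_forall_abs_le (hd · p)
  have hDi : Integrable (fun p => ⨆ θ, d θ p) (P.prod P) :=
    integrable_of_measurable_of_abs_le hDm hDb
  have hWi : ∀ τ : Fin N → Bool,
      Integrable (weightedSup f (fun _ => 0) fun i => boolSign (τ i)) P := fun τ =>
    integrable_of_measurable_of_abs_le (measurable_weightedSup hmeas)
      (abs_weightedSup_le hbd hN (by simp [hC]) (hsgn τ))
  have hghost : ∀ S, weightedSup f (fun θ => ∫ z, f θ z ∂μ) (fun _ : Fin N => -1) S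
      ≤ ∫ S', ⨆ θ, d θ (S', S) ∂P := fun S => by
    refine ciSup_le fun θ => ?_
    have heq : ∫ S', d θ (S', S) ∂P
        = ∫ z, f θ z ∂μ + (1 / N : ℝ) * ∑ i, (-1) * f θ (S i) := by
      have hev : ∀ i : Fin N, ∫ S', f θ (S' i) ∂P = ∫ z, f θ z ∂μ := fun i =>
        (measurePreserving_eval (fun _ : Fin N => μ) i).integral_comp_of_measurable (hmeas θ)
      have hevi : ∀ i : Fin N, Integrable (fun S' : Fin N → Z => f θ (S' i)) P := fun i =>
        integrable_of_measurable_of_abs_le (by fun_prop) fun S' => hbd θ _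
      simp only [d, one_mul]
      rw [integral_add ((integrable_finsetSum _ fun i _ => hevi i).const_mul _)
        (integrable_const _), integral_const_mul, integral_finsetSum _ fun i _ => hevi i]
      simp [hev, hN']
    rw [← heq]
    refine integral_mono
      (integrable_of_measurable_of_abs_le ((hdm θ).comp measurable_prodMk_right) fun _ => hd θ _)
      (integrable_of_measurable_of_abs_le (hDm.comp measurable_prodMk_right) fun _ => hDb _)
      fun S' => ?_
    exact le_ciSup (f := fun θ => d θ (S', S))
      ⟨2 * C, by rintro _ ⟨θ', rfl⟩; exact (abs_le.1 (hd θ' _)).2⟩ θ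
  have hsplit : ∀ p : (Fin N → Z) × (Fin N → Z),
      ⨆ θ, d θ (fun i => if σ i then p.1 i else p.2 i, fun i => if σ i then p.2 i else p.1 i)
        ≤ weightedSup f (fun _ => 0) (fun i => boolSign (σ i)) p.1
          + weightedSup f (fun _ => 0) (fun i => boolSign (!σ i)) p.2 := fun p => by
    refine ciSup_le fun θ => ?_
    have hle : ∀ (τ : Fin N → Bool) (S : Fin N → Z),
        (1 / N : ℝ) * ∑ i, boolSign (τ i) * f θ (S i)
          ≤ weightedSup f (fun _ => 0) (fun i => boolSign (τ i)) S := fun τ S => by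
      have := le_ciSup (f := fun θ => (0 : ℝ) + (1 / N : ℝ) * ∑ i, boolSign (τ i) * f θ (S i))
        ⟨2 * C, by
          rintro _ ⟨θ', rfl⟩
          exact (abs_le.1 (abs_offset_add_weighted_average_le hbd hN (b := fun _ => 0)
            (by simp [hC]) (hsgn τ) θ' S)).2⟩ θ
      simpa [weightedSup] using this
    refine le_trans (le_of_eq ?_) (add_le_add (hle σ p.1) (hle (fun i => !σ i) p.2))
    simp only [d]
    rw [← mul_add, ← mul_add, ← Finset.sum_add_distrib, ← Finset.sum_add_distrib]
    congr 1
    refine Finset.sum_congr rfl fun i _ => ?_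
    cases σ i <;> simp [boolSign]
    ring
  calc ∫ S, weightedSup f (fun θ => ∫ z, f θ z ∂μ) (fun _ : Fin N => -1) S ∂P
      ≤ ∫ S, ∫ S', ⨆ θ, d θ (S', S) ∂P ∂P :=
        integral_mono (integrable_of_measurable_of_abs_le (measurable_weightedSup hmeas)
          (abs_weightedSup_le hbd hN hR (by simp))) hDi.integral_prod_right hghost
    _ = ∫ p, ⨆ θ, d θ p ∂(P.prod P) := (integral_prod_symm _ hDi).symm
    _ = ∫ p, ⨆ θ, d θ (fun i => if σ i then p.1 i else p.2 i,
          fun i => if σ i then p.2 i else p.1 i) ∂(P.prod P) :=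
        integral_exchange_coordinates μ σ hDm
    _ ≤ ∫ p, (weightedSup f (fun _ => 0) (fun i => boolSign (σ i)) p.1
          + weightedSup f (fun _ => 0) (fun i => boolSign (!σ i)) p.2) ∂(P.prod P) := by
        exact integral_mono (integrable_of_measurable_of_abs_le
            (hDm.comp (measurable_exchange_coordinates σ)) fun _ => hDb _)
          (((hWi σ).comp_fst P).add ((hWi fun i => !σ i).comp_snd P)) hsplit
    _ = _ := by
        rw [integral_add ((hWi σ).comp_fst P) ((hWi fun i => !σ i).comp_snd P)]
        simp [integral_fun_fst, integral_fun_snd]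

end Symmetrization

section Rademacher

variable {Z Θ : Type*} {C : ℝ} {N : ℕ}

/-- The empirical Rademacher average of the family `f` on the sample `S`. -/
noncomputable def empiricalRademacher (f : Θ → Z → ℝ) (S : Fin N → Z) : ℝ :=
  (2 ^ N : ℝ)⁻¹ * ∑ σ : Fin N → Bool, weightedSup f (fun _ => 0) (fun i => boolSign (σ i)) S

variable {f : Θ → Z → ℝ}

lemma abs_average_signs_le {u : (Fin N → Bool) → ℝ} {K : ℝ} (hu : ∀ σ, |u σ| ≤ K) :
    |(2 ^ N : ℝ)⁻¹ * ∑ σ, u σ| ≤ K := by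
  rw [abs_mul, abs_of_pos (by positivity), inv_mul_le_iff₀ (by positivity)]
  refine (Finset.abs_sum_le_sum_abs _ _).trans ?_
  exact (Finset.sum_le_card_nsmul _ _ K fun σ _ => hu σ).trans (by simp)

lemma measurable_empiricalRademacher [MeasurableSpace Z] [Countable Θ]
    (hmeas : ∀ θ, Measurable (f θ)) :
    Measurable (empiricalRademacher f : (Fin N → Z) → ℝ) :=
  (Finset.measurable_fun_sum _ fun _ _ => measurable_weightedSup hmeas).const_mul _

variable [Nonempty Θ]

lemma abs_empiricalRademacher_le (hbd : ∀ θ z, |f θ z| ≤ C) (hN : 0 < N) (hC : 0 ≤ C)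
    (S : Fin N → Z) : |empiricalRademacher f S| ≤ 2 * C :=
  abs_average_signs_le fun _ =>
    abs_weightedSup_le hbd hN (by simp [hC]) (fun _ => (abs_boolSign _).le) S

lemma abs_empiricalRademacher_update_sub_le (hbd : ∀ θ z, |f θ z| ≤ C) (hN : 0 < N) (hC : 0 ≤ C)
    (S : Fin N → Z) (i : Fin N) (z : Z) :
    |empiricalRademacher f (Function.update S i z) - empiricalRademacher f S| ≤ 2 * C / N := by
  unfold empiricalRademacher
  rw [← mul_sub, ← Finset.sum_sub_distrib]
  exact abs_average_signs_le fun _ =>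
    abs_weightedSup_update_sub_le hbd hN (by simp [hC]) (fun _ => (abs_boolSign _).le) S i z

/-- **Symmetrization**: the expected uniform deviation is at most twice the expected empirical
Rademacher average. -/
lemma integral_weightedSup_deviation_le_two_mul_integral_empiricalRademacher
    [MeasurableSpace Z] [Countable Θ] (μ : Measure Z) [IsProbabilityMeasure μ]
    (hmeas : ∀ θ, Measurable (f θ)) (hbd : ∀ θ z, |f θ z| ≤ C) (hN : 0 < N) (hC : 0 ≤ C) :
    ∫ S, weightedSup f (fun θ => ∫ z, f θ z ∂μ) (fun _ : Fin N => -1) S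
        ∂(Measure.pi fun _ : Fin N => μ) ≤
      2 * ∫ S, empiricalRademacher f S ∂(Measure.pi fun _ : Fin N => μ) := by
  set P := Measure.pi fun _ : Fin N => μ
  set W : (Fin N → Bool) → ℝ := fun τ =>
    ∫ S, weightedSup f (fun _ => 0) (fun i => boolSign (τ i)) S ∂P
  have hrad : ∫ S, empiricalRademacher f S ∂P = (2 ^ N : ℝ)⁻¹ * ∑ σ, W σ := by
    unfold empiricalRademacher
    rw [integral_const_mul, integral_finsetSum]
    exact fun σ _ => integrable_of_measurable_of_abs_le (measurable_weightedSup hmeas)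
      (abs_weightedSup_le hbd hN (by simp [hC]) fun _ => (abs_boolSign _).le)
  have hsymm : ∀ σ, ∫ S, weightedSup f (fun θ => ∫ z, f θ z ∂μ) (fun _ : Fin N => -1) S ∂P
      ≤ W σ + W (fun i => !σ i) := integral_weightedSup_deviation_le μ hmeas hbd hN hC
  clear_value W
  have hneg : ∑ σ : Fin N → Bool, W (fun i => !σ i) = ∑ σ, W σ :=
    ((Equiv.refl (Fin N)).arrowCongr Equiv.boolNot).sum_comp W
  have hsum := Finset.card_nsmul_le_sum Finset.univ _ _ fun σ _ => hsymm σ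
  rw [Finset.sum_add_distrib, hneg, Finset.card_univ, Fintype.card_fun, Fintype.card_bool,
    Fintype.card_fin, nsmul_eq_mul, Nat.cast_pow, Nat.cast_ofNat, ← two_mul] at hsum
  rw [hrad, mul_left_comm, le_inv_mul_iff₀ (by positivity)]
  exact hsum

end Rademacher

/-- Uniform deviation bound in terms of empirical Rademacher averages: for a countable family of
measurable functions uniformly bounded by `C`, with probability at least `1 − δ` over an i.i.d.
sample of size `N`, the uniform deviation of empirical means from true means is bounded by twice
the empirical Rademacher average plus `3C√(2 log(2/δ)/N)`. The Rademacher average is written as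
the exact average over all `2^N` sign patterns (`σ i = true` encodes the sign `+1`). -/
theorem uniform_deviation_rademacher {Z : Type*} [MeasurableSpace Z]
    (μ : Measure Z) [IsProbabilityMeasure μ]
    {Θ : Type*} [Countable Θ] [Nonempty Θ] (C : ℝ) (hC : 0 < C) (f : Θ → Z → ℝ)
    (hmeas : ∀ θ, Measurable (f θ)) (hbd : ∀ θ z, |f θ z| ≤ C)
    (N : ℕ) (hN : 0 < N) (δ : ℝ) (hδ0 : 0 < δ) (hδ1 : δ < 1) :
    ENNReal.ofReal (1 - δ) ≤
      (Measure.pi fun _ : Fin N => μ) {S |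
        (⨆ θ, ((∫ z, f θ z ∂μ) - (1 / N) * ∑ i, f θ (S i)))
          ≤ 2 * ((2 ^ N : ℝ)⁻¹ * ∑ σ : Fin N → Bool,
                ⨆ θ, (1 / N) * ∑ i, (if σ i then (1 : ℝ) else -1) * f θ (S i))
            + 3 * C * Real.sqrt (2 * Real.log (2 / δ) / N)} := by
  set P := Measure.pi fun _ : Fin N => μ
  have hN' : (0 : ℝ) < N := by exact_mod_cast hN
  have hR : ∀ θ, |∫ z, f θ z ∂μ| ≤ C := fun θ =>
    abs_integral_le_of_forall_abs_le (hbd θ)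
  set Φ : (Fin N → Z) → ℝ := weightedSup f (fun θ => ∫ z, f θ z ∂μ) fun _ => -1 with hΦ
  have hΦm : Measurable Φ := measurable_weightedSup hmeas
  have hΦb : ∀ S, |Φ S| ≤ 2 * C := abs_weightedSup_le hbd hN hR (by simp)
  have hradm : Measurable (empiricalRademacher f : (Fin N → Z) → ℝ) :=
    measurable_empiricalRademacher hmeas
  have hradb : ∀ S : Fin N → Z, |empiricalRademacher f S| ≤ 2 * C :=
    abs_empiricalRademacher_le hbd hN hC.le
  set g : (Fin N → Z) → ℝ := fun S => Φ S - 2 * empiricalRademacher f S with hg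
  have hgm : Measurable g := by fun_prop
  have hmean : ∫ S, g S ∂P ≤ 0 := by
    rw [hg, integral_sub (integrable_of_measurable_of_abs_le hΦm hΦb)
      ((integrable_of_measurable_of_abs_le hradm hradb).const_mul 2), integral_const_mul, sub_nonpos]
    exact integral_weightedSup_deviation_le_two_mul_integral_empiricalRademacher μ hmeas hbd hN hC.le
  have hsub := hasSubgaussianMGF_of_bounded_differences μ (6 * C / N).toNNReal (6 * C) N g hgm
    (fun S => abs_le.2 ⟨by linarith [abs_le.1 (hΦb S), abs_le.1 (hradb S)],
      by linarith [abs_le.1 (hΦb S), abs_le.1 (hradb S)]⟩)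
    fun S i z => by
      rw [Real.coe_toNNReal _ (by positivity)]
      have h₁ := abs_le.1 (abs_weightedSup_update_sub_le hbd hN hR (a := fun _ => -1) (by simp) S i z)
      have h₂ := abs_le.1 (abs_empiricalRademacher_update_sub_le hbd hN hC.le S i z)
      have h₃ : 6 * C / N = 3 * (2 * C / N) := by ring
      rw [h₃, abs_le]
      constructor <;> linarith
  have hlog : 0 ≤ Real.log (2 / δ) := Real.log_nonneg (by rw [le_div_iff₀ hδ0]; linarith)
  set ε : ℝ := 3 * C * Real.sqrt (2 * Real.log (2 / δ) / N) with hε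
  have htail := hsub.measure_ge_le (ε := ε) (by positivity)
  have hexp : Real.exp (-ε ^ 2 / (2 * (N * ((6 * C / N).toNNReal / 2) ^ 2 : NNReal))) = δ / 2 := by
    push_cast
    rw [Real.coe_toNNReal _ (by positivity), hε, mul_pow, Real.sq_sqrt (by positivity),
      show -((3 * C) ^ 2 * (2 * Real.log (2 / δ) / N)) / (2 * (N * (6 * C / N / 2) ^ 2))
        = -Real.log (2 / δ) by field_simp; ring, Real.exp_neg, Real.exp_log (by positivity), inv_div]
  rw [hexp] at htail
  have hbad : MeasurableSet {S | ε ≤ g S - ∫ S', g S' ∂P} :=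
    measurableSet_le measurable_const (by fun_prop)
  calc ENNReal.ofReal (1 - δ) ≤ ENNReal.ofReal (P.real {S | ε ≤ g S - ∫ S', g S' ∂P}ᶜ) := by
        rw [probReal_compl_eq_one_sub hbad]
        exact ENNReal.ofReal_le_ofReal (by linarith)
    _ = P {S | ε ≤ g S - ∫ S', g S' ∂P}ᶜ := ofReal_measureReal
    _ ≤ _ := by
        refine measure_mono fun S hS => ?_
        have hlt : g S - ∫ S', g S' ∂P < ε := not_le.1 hS
        have hle : Φ S ≤ 2 * empiricalRademacher f S + ε := by
          simp only [hg] at hlt hmean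
          linarith
        simpa [hΦ, weightedSup, empiricalRademacher, boolSign, sub_eq_add_neg] using hle
end
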